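/- (Proposition 2, necessity.) Under imperfect sensing, suppose q_b, q_e ≥ 0 with q_b + q_e = 1 and nonnegative conditional probabilities q(s,i|b), q(s,i|e) with Σ_{s,i} q(s,i|b) = 1 and Σ_{s,i} q(s,i|e) = 1 satisfy the rate-balance equation q_b 𝒫_D Σ_{s,i} r_p(s,i) q(s,i|b) + q_b (1−𝒫_D) r_p0 Σ_s q(s,0|e) = λ_p. Then λ_p / (𝒫_D r_{p,max} + (1−𝒫_D) r_p0) ≤ q_b ≤ min{ λ_p / (𝒫_D r_p0), 1 }, where r_{p,max} = max_{s,i} r_p(s,i). -/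

import Mathlib

open Finset

/-!
Each busy slot serves a PU packet with probability
`μ = 𝒫_D · ∑ r_p(s,i) q(s,i|b) + (1 - 𝒫_D) · r_p0 · ∑ q(s,0|e)`, and the balance equation reads
`q_b μ = λ_p`. The first sum is an average of success probabilities, so it lies in
`[r_p0, r_{p,max}]`, and the second is a probability; hence
`𝒫_D r_p0 ≤ μ ≤ 𝒫_D r_{p,max} + (1 - 𝒫_D) r_p0`.
-/

section

variable {S : Type*} [Fintype S] {ι : S → Type*} [∀ s, Fintype (ι s)]

theorem sum_section_le_sum_sum {M : Type*} [AddCommMonoid M] [PartialOrder M]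
    [IsOrderedAddMonoid M] {q : ∀ s, ι s → M} (hq : ∀ s i, 0 ≤ q s i) (o : ∀ s, ι s) :
    ∑ s, q s (o s) ≤ ∑ s, ∑ i, q s i :=
  sum_le_sum fun s _ ↦ single_le_sum (fun i _ ↦ hq s i) (mem_univ (o s))

variable {K : Type*} [Field K] [LinearOrder K] [IsStrictOrderedRing K]

theorem sum_sum_mul_mem_Icc {f w : ∀ s, ι s → K} {a b : K} (hf : ∀ s i, f s i ∈ Set.Icc a b)
    (hw : ∀ s i, 0 ≤ w s i) (hw1 : ∑ s, ∑ i, w s i = 1) :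
    ∑ s, ∑ i, f s i * w s i ∈ Set.Icc a b := by
  rw [← Fintype.sum_sigma'] at hw1 ⊢
  simpa only [smul_eq_mul, mul_comm] using
    (convex_Icc a b).sum_mem (fun x _ ↦ hw x.1 x.2) hw1 fun x _ ↦ hf x.1 x.2

/-- The mean PU service rate per busy slot under imperfect sensing with detection probability
`PD`: on detection the action `(s, i)` is drawn from `qB`, on misdetection from `qE`, where only
the silent actions `(s, o s)` let the PU succeed, at rate `r0`. The silent action `i = 0` of the
paper is an arbitrary choice `o s` here. -/
def busyServiceRate (PD r0 : K) (r qB qE : ∀ s, ι s → K) (o : ∀ s, ι s) : K :=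
  PD * ∑ s, ∑ i, r s i * qB s i + (1 - PD) * r0 * ∑ s, qE s (o s)

theorem busyServiceRate_mem_Icc {PD r0 rmax : K} {r qB qE : ∀ s, ι s → K} (o : ∀ s, ι s)
    (hPD : PD ∈ Set.Icc 0 1) (hr0 : 0 ≤ r0) (hr : ∀ s i, r s i ∈ Set.Icc r0 rmax)
    (hqB : ∀ s i, 0 ≤ qB s i) (hqB1 : ∑ s, ∑ i, qB s i = 1)
    (hqE : ∀ s i, 0 ≤ qE s i) (hqE1 : ∑ s, ∑ i, qE s i = 1) :
    busyServiceRate PD r0 r qB qE o ∈ Set.Icc (PD * r0) (PD * rmax + (1 - PD) * r0) := by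
  obtain ⟨hPD0, hPD1⟩ := hPD
  obtain ⟨hmean0, hmeanmax⟩ := sum_sum_mul_mem_Icc hr hqB hqB1
  have hsilent0 : 0 ≤ ∑ s, qE s (o s) := sum_nonneg fun s _ ↦ hqE s (o s)
  have hsilent1 : ∑ s, qE s (o s) ≤ 1 := (sum_section_le_sum_sum hqE o).trans_eq hqE1
  have hmissed : 0 ≤ (1 - PD) * r0 := mul_nonneg (sub_nonneg.2 hPD1) hr0
  exact ⟨le_add_of_le_of_nonneg (mul_le_mul_of_nonneg_left hmean0 hPD0)
      (mul_nonneg hmissed hsilent0),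
    add_le_add (mul_le_mul_of_nonneg_left hmeanmax hPD0)
      (mul_le_of_le_one_right hmissed hsilent1)⟩

theorem mul_div_le_and_le_mul_div {q μ l u : K} (hq : 0 ≤ q) (hl : 0 < l)
    (hμ : μ ∈ Set.Icc l u) : q * μ / u ≤ q ∧ q ≤ q * μ / l :=
  ⟨div_le_of_le_mul₀ (hl.le.trans (hμ.1.trans hμ.2)) hq (mul_le_mul_of_nonneg_left hμ.2 hq),
    (le_div_iff₀ hl).2 (mul_le_mul_of_nonneg_left hμ.1 hq)⟩

theorem imperfect_sensing_qb_bounds_general {PD r0 rmax lam qb qe : K}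
    {r qB qE : ∀ s, ι s → K} (o : ∀ s, ι s) (hPD0 : 0 < PD) (hPD1 : PD ≤ 1) (hr0 : 0 < r0)
    (hr : ∀ s i, r s i ∈ Set.Icc r0 rmax) (hqb : 0 ≤ qb) (hqe : 0 ≤ qe) (hbe : qb + qe = 1)
    (hqB : ∀ s i, 0 ≤ qB s i) (hqE : ∀ s i, 0 ≤ qE s i)
    (hqB1 : ∑ s, ∑ i, qB s i = 1) (hqE1 : ∑ s, ∑ i, qE s i = 1)
    (hbal : qb * PD * (∑ s, ∑ i, r s i * qB s i) + qb * (1 - PD) * r0 * (∑ s, qE s (o s)) = lam) :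
    lam / (PD * rmax + (1 - PD) * r0) ≤ qb ∧ qb ≤ min (lam / (PD * r0)) 1 := by
  have hrate : qb * busyServiceRate PD r0 r qB qE o = lam := by
    rw [← hbal, busyServiceRate]
    ring
  have hbounds := mul_div_le_and_le_mul_div hqb (mul_pos hPD0 hr0)
    (busyServiceRate_mem_Icc o ⟨hPD0.le, hPD1⟩ hr0.le hr hqB hqB1 hqE hqE1)
  rw [hrate] at hbounds
  exact ⟨hbounds.1, le_min hbounds.2 (hbe ▸ le_add_of_nonneg_right hqe)⟩

end

/-- **Proposition 2, necessity.** Under imperfect sensing, any stationary policy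
whose conditional probabilities satisfy the rate-balance equation forces the
busy probability `q_b` to lie in the stated interval. -/
theorem imperfect_sensing_qb_bounds
    {S : Type*} [Fintype S] [Nonempty S]
    (I : S → ℕ) (hI : ∀ s, 1 ≤ I s)
    (rp : (s : S) → Fin (I s + 1) → ℝ) (rp0 : ℝ)
    (hrp : ∀ s i, rp s i ∈ Set.Icc (0:ℝ) 1) (hrp00 : ∀ s, rp s 0 = rp0)
    (hrp0pos : 0 < rp0) (hrp0le : rp0 ≤ 1)
    (hmono : ∀ s, Monotone (rp s))
    (lam : ℝ) (hlam : 0 ≤ lam)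
    (PD : ℝ) (hPDpos : 0 < PD) (hPDle : PD ≤ 1)
    (rpmax : ℝ) (hrpmax : IsGreatest {v | ∃ s i, v = rp s i} rpmax)
    (qb qe : ℝ) (qB qE : (s : S) → Fin (I s + 1) → ℝ)
    (hqb : 0 ≤ qb) (hqe : 0 ≤ qe) (hbe : qb + qe = 1)
    (hqBnn : ∀ s i, 0 ≤ qB s i) (hqEnn : ∀ s i, 0 ≤ qE s i)
    (hqB1 : (∑ s, ∑ i, qB s i) = 1) (hqE1 : (∑ s, ∑ i, qE s i) = 1)
    (hbal : qb * PD * (∑ s, ∑ i, rp s i * qB s i)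
      + qb * (1 - PD) * rp0 * (∑ s, qE s 0) = lam) :
    lam / (PD * rpmax + (1 - PD) * rp0) ≤ qb ∧ qb ≤ min (lam / (PD * rp0)) 1 := by
  have hr (s i) : rp s i ∈ Set.Icc rp0 rpmax :=
    ⟨hrp00 s ▸ hmono s (Fin.zero_le i), hrpmax.2 ⟨s, i, rfl⟩⟩
  exact imperfect_sensing_qb_bounds_general (fun _ ↦ 0) hPDpos hPDle hrp0pos hr
    hqb hqe hbe hqBnn hqEnn hqB1 hqE1 hbal
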